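/- The operators satisfy the q-deformed antisymmetry relation of the momentum subalgebra: P₋₁ P₁ − P₁ P₋₁ = (q^{−3/2} − q^{−1/2}) P₀² as linear operators on V. -/

import Mathlib

/-!
Both sides are diagonal in the canonical basis. On `e_{π₀,π₁,j}` the left side has eigenvalue
`M² q^(3/2+2π₁) ((1 - q^(2π₀+2)) - (1 - q^(2π₀))) = M² q^(3/2+2π₁+2π₀) (1 - q²)`; the formula also
covers the boundary `π₀ = 0`, where `P₋₁` vanishes, because then `1 - q^(2π₀) = 0`.
The right side has eigenvalue `q^(-3/2) (1 - q) · M² (1 + q⁻¹) q^(4+2π₀+2π₁)`, the same number.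
The lemmas `Pm1_P1_e`, `P1_Pm1_e`, `P0_P0_e` compute the eigenvalues and `eigenvalue_identity`
compares them.
-/

/- The irreducible Hilbert-space representation of highest weight `w` of the q-Euclidean
algebra `U_q(e³)` (Theorem 3 of the paper): `S` is the index set of the q-lattice,
`V` the space of finitely supported functions `S → ℂ` with canonical basis `e`,
and `P0, P1, Pm1, Lam, LamInv, K, Lp, Lm` realize the generators
`p⁰, p¹, p⁻¹, Λ, Λ⁻¹, k¹, L^{01}, L^{−1,0}`. -/

noncomputable section

/-- The q-lattice index set `S = {(π₀,π₁,j) ∈ ℤ³ : π₀ ≥ 0, j ≤ π₀}`. -/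
structure SIdx : Type where
  π0 : ℤ
  π1 : ℤ
  j : ℤ
  hπ0 : 0 ≤ π0
  hj : j ≤ π0

instance : DecidableEq SIdx := fun _ _ => Classical.dec _

/-- `V`: finitely supported functions `S → ℂ`. -/
abbrev V : Type := SIdx →₀ ℂ

/-- The canonical basis vector `e_{π₀,π₁,j}`. -/
def e (s : SIdx) : V := Finsupp.single s 1

/-- The linear operator on `V` determined by its values on the canonical basis. -/
def opOf (g : SIdx → V) : V →ₗ[ℂ] V :=
  Finsupp.lsum ℂ fun s => LinearMap.toSpanSingleton ℂ V (g s)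

/-- `P₀ e_{π₀,π₁,j} = ε M (1+q⁻¹)^(1/2) q^(2+π₀+π₁) e_{π₀,π₁,j}`. -/
def P0 (q M ε : ℝ) : V →ₗ[ℂ] V :=
  opOf fun s => ((ε * M * Real.sqrt (1 + q⁻¹) * q ^ (2 + s.π0 + s.π1) : ℝ) : ℂ) • e s

/-- `P₁ e_{π₀,π₁,j} = M (1−q^(2π₀+2))^(1/2) q^(1+π₁) e_{π₀+1,π₁,j+1}`. -/
def P1 (q M : ℝ) : V →ₗ[ℂ] V :=
  opOf fun s => ((M * Real.sqrt (1 - q ^ (2 * s.π0 + 2)) * q ^ (1 + s.π1) : ℝ) : ℂ) •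
    e ⟨s.π0 + 1, s.π1, s.j + 1, by have h0 := s.hπ0; have h1 := s.hj; omega, by have h0 := s.hπ0; have h1 := s.hj; omega⟩

/-- `P₋₁ e_{π₀,π₁,j} = M (1−q^(2π₀))^(1/2) q^(1/2+π₁) e_{π₀−1,π₁,j−1}` (zero if `π₀ = 0`). -/
def Pm1 (q M : ℝ) : V →ₗ[ℂ] V :=
  opOf fun s =>
    if h : 0 < s.π0 then
      ((M * Real.sqrt (1 - q ^ (2 * s.π0)) * q ^ ((1 : ℝ) / 2 + (s.π1 : ℝ)) : ℝ) : ℂ) •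
        e ⟨s.π0 - 1, s.π1, s.j - 1, by have h0 := s.hπ0; have h1 := s.hj; omega, by have h0 := s.hπ0; have h1 := s.hj; omega⟩
    else 0

/-- `Λ e_{π₀,π₁,j} = e_{π₀,π₁+1,j}`. -/
def Lam : V →ₗ[ℂ] V := opOf fun s => e ⟨s.π0, s.π1 + 1, s.j, s.hπ0, s.hj⟩

/-- `Λ⁻¹ e_{π₀,π₁,j} = e_{π₀,π₁−1,j}`. -/
def LamInv : V →ₗ[ℂ] V := opOf fun s => e ⟨s.π0, s.π1 - 1, s.j, s.hπ0, s.hj⟩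

/-- `K e_{π₀,π₁,j} = q^(2j+w) e_{π₀,π₁,j}`. -/
def K (q w : ℝ) : V →ₗ[ℂ] V :=
  opOf fun s => ((q ^ (2 * (s.j : ℝ) + w) : ℝ) : ℂ) • e s

/-- `L⁺ e_{π₀,π₁,j} = q^(−3/2−π₀) [(1+q^(π₀−j−w))(1−q^(π₀−j))/((q⁻¹−1)(1−q))]^(1/2)
    e_{π₀,π₁,j+1}` (zero if `j = π₀`). -/
def Lp (q w : ℝ) : V →ₗ[ℂ] V :=
  opOf fun s =>
    if h : s.j < s.π0 then
      ((q ^ (-(3 : ℝ) / 2 - (s.π0 : ℝ)) *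
          Real.sqrt ((1 + q ^ ((s.π0 : ℝ) - (s.j : ℝ) - w)) *
            (1 - q ^ ((s.π0 : ℝ) - (s.j : ℝ))) / ((q⁻¹ - 1) * (1 - q))) : ℝ) : ℂ) •
        e ⟨s.π0, s.π1, s.j + 1, s.hπ0, by have h0 := s.hπ0; have h1 := s.hj; omega⟩
    else 0

/-- `L⁻ e_{π₀,π₁,j} = q^(−π₀) [(1+q^(π₀−j+1−w))(1−q^(π₀−j+1))/((q⁻¹−1)(1−q))]^(1/2)
    e_{π₀,π₁,j−1}`. -/
def Lm (q w : ℝ) : V →ₗ[ℂ] V :=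
  opOf fun s =>
    ((q ^ (-(s.π0 : ℝ)) *
        Real.sqrt ((1 + q ^ ((s.π0 : ℝ) - (s.j : ℝ) + 1 - w)) *
          (1 - q ^ ((s.π0 : ℝ) - (s.j : ℝ) + 1)) / ((q⁻¹ - 1) * (1 - q))) : ℝ) : ℂ) •
      e ⟨s.π0, s.π1, s.j - 1, s.hπ0, by have h0 := s.hπ0; have h1 := s.hj; omega⟩

theorem opOf_e (g : SIdx → V) (s : SIdx) : opOf g (e s) = g s := by
  simp [opOf, e]

theorem rpow_half_add {q : ℝ} (hq0 : 0 < q) (n : ℤ) :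
    q ^ ((1 : ℝ) / 2 + (n : ℝ)) = Real.sqrt q * q ^ n := by
  rw [Real.rpow_add hq0, Real.rpow_intCast, Real.sqrt_eq_rpow]

theorem one_sub_zpow_nonneg {q : ℝ} (hq0 : 0 < q) (hq1 : q < 1) {n : ℤ} (hn : 0 ≤ n) :
    0 ≤ 1 - q ^ n :=
  sub_nonneg.2 (zpow_le_one₀ hq0 hq1.le hn)

theorem Pm1_P1_e {q : ℝ} (M : ℝ) (hq0 : 0 < q) (hq1 : q < 1) (s : SIdx) :
    Pm1 q M (P1 q M (e s)) =
      ((M ^ 2 * (1 - q ^ (2 * s.π0 + 2)) * q ^ (1 + s.π1) * (Real.sqrt q * q ^ s.π1) : ℝ) : ℂ)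
        • e s := by
  obtain ⟨a, b, j, ha, hj⟩ := s
  have hpos : 0 < a + 1 := by omega
  have hsq := Real.mul_self_sqrt
    (one_sub_zpow_nonneg hq0 hq1 (show 0 ≤ 2 * a + 2 by omega))
  rw [P1, opOf_e, map_smul, Pm1, opOf_e]
  simp only [hpos, dif_pos, smul_smul, add_sub_cancel_right, ← Complex.ofReal_mul,
    rpow_half_add hq0, show 2 * (a + 1) = 2 * a + 2 by ring]
  congr 2
  linear_combination (M ^ 2 * q ^ (1 + b) * (Real.sqrt q * q ^ b)) * hsq

theorem P1_Pm1_e {q : ℝ} (M : ℝ) (hq0 : 0 < q) (hq1 : q < 1) (s : SIdx) :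
    P1 q M (Pm1 q M (e s)) =
      ((M ^ 2 * (1 - q ^ (2 * s.π0)) * q ^ (1 + s.π1) * (Real.sqrt q * q ^ s.π1) : ℝ) : ℂ)
        • e s := by
  obtain ⟨a, b, j, ha, hj⟩ := s
  rw [Pm1, opOf_e]
  by_cases h : 0 < a
  · have hsq := Real.mul_self_sqrt
      (one_sub_zpow_nonneg hq0 hq1 (show 0 ≤ 2 * a by omega))
    simp only [h, dif_pos, map_smul]
    rw [P1, opOf_e]
    simp only [smul_smul, sub_add_cancel, ← Complex.ofReal_mul,
      rpow_half_add hq0, show 2 * (a - 1) + 2 = 2 * a by ring]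
    congr 2
    linear_combination (M ^ 2 * q ^ (1 + b) * (Real.sqrt q * q ^ b)) * hsq
  · obtain rfl : a = 0 := by omega
    simp

theorem P0_P0_e (q M ε : ℝ) (s : SIdx) :
    P0 q M ε (P0 q M ε (e s)) =
      (((ε * M * Real.sqrt (1 + q⁻¹) * q ^ (2 + s.π0 + s.π1)) ^ 2 : ℝ) : ℂ) • e s := by
  simp only [P0, opOf_e, map_smul, smul_smul, ← Complex.ofReal_mul, sq]

theorem eigenvalue_identity {q ε : ℝ} (M : ℝ) (hq0 : 0 < q) (hε : ε = 1 ∨ ε = -1) (a b : ℤ) :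
    M ^ 2 * (1 - q ^ (2 * a + 2)) * q ^ (1 + b) * (Real.sqrt q * q ^ b)
      - M ^ 2 * (1 - q ^ (2 * a)) * q ^ (1 + b) * (Real.sqrt q * q ^ b) =
    (q ^ (-(3 : ℝ) / 2) - q ^ (-(1 : ℝ) / 2))
      * (ε * M * Real.sqrt (1 + q⁻¹) * q ^ (2 + a + b)) ^ 2 := by
  have hq : q ≠ 0 := hq0.ne'
  have hε2 : ε ^ 2 = 1 := by rcases hε with rfl | rfl <;> norm_num
  have h3 : q ^ (-(3 : ℝ) / 2) = Real.sqrt q * q ^ (-2 : ℤ) := by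
    rw [← rpow_half_add hq0]; norm_num
  have h1 : q ^ (-(1 : ℝ) / 2) = Real.sqrt q * q ^ (-1 : ℤ) := by
    rw [← rpow_half_add hq0]; norm_num
  have h2a : q ^ (2 * a) = (q ^ a) ^ 2 := by
    rw [mul_comm, zpow_mul]; rfl
  have e2 : q ^ (2 : ℤ) = q ^ 2 := rfl
  have em2 : q ^ (-2 : ℤ) = (q ^ 2)⁻¹ := by rw [zpow_neg]; rfl
  rw [h3, h1, mul_pow, mul_pow, mul_pow, hε2, Real.sq_sqrt (by positivity)]
  simp only [zpow_add₀ hq, h2a, e2, em2, zpow_one, zpow_neg_one]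
  field_simp
  ring

/-- The q-deformed antisymmetry relation of the momentum subalgebra:
`P₋₁ P₁ − P₁ P₋₁ = (q^(−3/2) − q^(−1/2)) P₀²`. -/
theorem momentum_q_antisymmetry
    (q M ε w : ℝ) (hq0 : 0 < q) (hq1 : q < 1) (hM : 0 < M)
    (hε : ε = 1 ∨ ε = -1) (hw : 0 ≤ w) :
    Pm1 q M ∘ₗ P1 q M - P1 q M ∘ₗ Pm1 q M =
      ((q ^ (-(3 : ℝ) / 2) - q ^ (-(1 : ℝ) / 2) : ℝ) : ℂ) • (P0 q M ε ∘ₗ P0 q M ε) := by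
  refine Finsupp.lhom_ext' fun s => LinearMap.ext_ring ?_
  change Pm1 q M (P1 q M (e s)) - P1 q M (Pm1 q M (e s)) =
    ((q ^ (-(3 : ℝ) / 2) - q ^ (-(1 : ℝ) / 2) : ℝ) : ℂ) • P0 q M ε (P0 q M ε (e s))
  rw [Pm1_P1_e M hq0 hq1, P1_Pm1_e M hq0 hq1, P0_P0_e, ← sub_smul, smul_smul,
    ← Complex.ofReal_sub, ← Complex.ofReal_mul, eigenvalue_identity M hq0 hε]
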